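/- There is no group homomorphism φ : A(D_n) → A(B_n) that is injective and satisfies π_D = π_B ∘ φ, where π_B : A(B_n) → B_n and π_D : A(D_n) → B_n are the epimorphisms defined on standard generators by π_B(β₁) = 1, π_B(β_i) = α_{i-1} for i ≥ 2, and π_D(δ₁) = π_D(δ₂) = α₁, π_D(δ_i) = α_{i-1} for i ≥ 3 (with n ≥ 4). -/

import Mathlib

/-- The braid relator `a b a (b a b)⁻¹`. -/
def braidWord {α : Type*} (a b : FreeGroup α) : FreeGroup α := a * b * a * (b * a * b)⁻¹

/-- The commutation relator `a b a⁻¹ b⁻¹`. -/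
def commWord {α : Type*} (a b : FreeGroup α) : FreeGroup α := a * b * a⁻¹ * b⁻¹

/-- Braid relators on `k` generators `α₀, …, α_{k-1}` (braid group on `k+1` strands). -/
def braidRels (k : ℕ) : Set (FreeGroup (Fin k)) :=
  {r | ∃ i j : Fin k,
    ((i : ℕ) + 1 = j ∧ r = braidWord (FreeGroup.of i) (FreeGroup.of j)) ∨
    ((i : ℕ) + 2 ≤ j ∧ r = commWord (FreeGroup.of i) (FreeGroup.of j))}

/-- Relators of the Artin group of type `Bₙ` on generators `β₀, …, β_{n-1}`
(standing for `β₁, …, βₙ`): `β₀β₁β₀β₁ = β₁β₀β₁β₀`; braid relations between consecutive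
generators `βᵢ, βᵢ₊₁` for `i ≥ 1`; commutation for `|i-j| ≥ 2`. -/
def typeBRels (n : ℕ) : Set (FreeGroup (Fin n)) :=
  {r | ∃ i j : Fin n,
    ((i : ℕ) = 0 ∧ (j : ℕ) = 1 ∧
      r = (FreeGroup.of i * FreeGroup.of j) ^ 2 * ((FreeGroup.of j * FreeGroup.of i) ^ 2)⁻¹) ∨
    (1 ≤ (i : ℕ) ∧ (i : ℕ) + 1 = j ∧ r = braidWord (FreeGroup.of i) (FreeGroup.of j)) ∨
    ((i : ℕ) + 2 ≤ j ∧ r = commWord (FreeGroup.of i) (FreeGroup.of j))}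

/-- Relators of the Artin group of type `Dₙ` on generators `δ₀, …, δ_{n-1}`
(standing for `δ₁, …, δₙ`): `δ₀δ₁ = δ₁δ₀`; both `δ₀` and `δ₁` braid with `δ₂`;
braid relations between consecutive generators `δᵢ, δᵢ₊₁` for `i ≥ 2`;
commutation otherwise. -/
def typeDRels (n : ℕ) : Set (FreeGroup (Fin n)) :=
  {r | ∃ i j : Fin n,
    ((i : ℕ) = 0 ∧ (j : ℕ) = 1 ∧ r = commWord (FreeGroup.of i) (FreeGroup.of j)) ∨
    ((i : ℕ) = 0 ∧ (j : ℕ) = 2 ∧ r = braidWord (FreeGroup.of i) (FreeGroup.of j)) ∨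
    ((i : ℕ) = 1 ∧ (j : ℕ) = 2 ∧ r = braidWord (FreeGroup.of i) (FreeGroup.of j)) ∨
    (2 ≤ (i : ℕ) ∧ (i : ℕ) + 1 = j ∧ r = braidWord (FreeGroup.of i) (FreeGroup.of j)) ∨
    ((i : ℕ) = 0 ∧ 3 ≤ (j : ℕ) ∧ r = commWord (FreeGroup.of i) (FreeGroup.of j)) ∨
    (1 ≤ (i : ℕ) ∧ (i : ℕ) + 2 ≤ j ∧ r = commWord (FreeGroup.of i) (FreeGroup.of j))}

/-!
By the Artin representation, `A(Bₙ)` is the semidirect product `Fₙ ⋊ Bₙ`, and `π_B` is its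
projection. Suppose `π_B ∘ φ = π_D`, and let `a, b, c` be the images of `δ₁, δ₂, δ₃` under `φ`. Then
`w = a b⁻¹` lies in `Fₙ`, and the relations of type `Dₙ` give
`a² (c w c⁻¹) a⁻² = (c w c⁻¹) w⁻²`. Since `a` lies over `α₁`, which acts on the abelianization of
`Fₙ` by a transposition, conjugation by `a²` acts trivially on the abelianization and therefore on
all graded pieces of the filtration of `Fₙ` by rational dimension subgroups. Hence if `w` lies in
the `k`-th of these subgroups then `w²` lies in the next one, and so does `w`, the quotients being
torsion-free. By Magnus these subgroups of `Fₙ` intersect trivially, so `w = 1`, that is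
`φ δ₁ = φ δ₂`. But `δ₁ ≠ δ₂`, because they are distinguished by signed permutations.
-/

section DimensionSubgroup

open MonoidAlgebra (of lift_of mapDomainAlgHom)

theorem map_mem_pow_of_le_comap {R S : Type*} [Ring R] [Ring S] (f : R →+* S) {I : Ideal R}
    {J : Ideal S} [I.IsTwoSided] [J.IsTwoSided] (hIJ : I ≤ J.comap f) {k : ℕ} {x : R}
    (hx : x ∈ I ^ k) : f x ∈ J ^ k := by
  induction k generalizing x with
  | zero => rw [Submodule.pow_zero, Ideal.one_eq_top]; exact Submodule.mem_top
  | succ k ih =>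
    rw [Ideal.IsTwoSided.pow_succ] at hx ⊢
    induction hx using Submodule.mul_induction_on' with
    | mem_mul_mem m hm v hv => exact map_mul f m v ▸ Ideal.mul_mem_mul (hIJ hm) (ih hv)
    | add x _ y _ hx hy => exact map_add f x y ▸ add_mem hx hy

/-- The augmentation ideal of the rational group algebra `ℚ[G]`: the kernel of the ring
homomorphism sending every element of `G` to `1`. -/
noncomputable def augmentationIdeal (G : Type*) [Group G] : Ideal (MonoidAlgebra ℚ G) :=
  RingHom.ker (MonoidAlgebra.lift ℚ ℚ G 1)

instance (G : Type*) [Group G] : (augmentationIdeal G).IsTwoSided :=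
  inferInstanceAs (RingHom.ker _).IsTwoSided

variable {G H : Type*} [Group G] [Group H]

theorem of_sub_one_mem_augmentationIdeal (g : G) : of ℚ G g - 1 ∈ augmentationIdeal G := by
  rw [augmentationIdeal, RingHom.mem_ker, map_sub, lift_of, map_one, MonoidHom.one_apply, sub_self]

theorem mapDomainAlgHom_of (f : G →* H) (g : G) :
    mapDomainAlgHom ℚ ℚ f (of ℚ G g) = of ℚ H (f g) := by
  simp

theorem map_mem_augmentationIdeal_pow (f : G →* H) {k : ℕ} {x : MonoidAlgebra ℚ G}
    (hx : x ∈ augmentationIdeal G ^ k) :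
    mapDomainAlgHom ℚ ℚ f x ∈ augmentationIdeal H ^ k := by
  refine map_mem_pow_of_le_comap (mapDomainAlgHom ℚ ℚ f).toRingHom (fun y hy => ?_) hx
  have hcomp : (MonoidAlgebra.lift ℚ ℚ H 1).comp (mapDomainAlgHom ℚ ℚ f) =
      MonoidAlgebra.lift ℚ ℚ G 1 := by ext; simp
  rw [augmentationIdeal, RingHom.mem_ker, ← hcomp] at hy
  exact hy

theorem of_mul_sub_one (g h : G) :
    of ℚ G (g * h) - 1 = of ℚ G g * (of ℚ G h - 1) + (of ℚ G g - 1) := by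
  rw [map_mul]; noncomm_ring

/-- The `k`-th rational dimension subgroup of `G`: the elements congruent to `1` modulo the
`k`-th power of the augmentation ideal of `ℚ[G]`. -/
noncomputable def rationalDimensionSubgroup (G : Type*) [Group G] (k : ℕ) : Subgroup G where
  carrier := {g | of ℚ G g - 1 ∈ augmentationIdeal G ^ k}
  one_mem' := by rw [Set.mem_ofPred_eq, map_one, sub_self]; exact zero_mem _
  mul_mem' {g h} hg hh := by
    rw [Set.mem_ofPred_eq, of_mul_sub_one]
    exact add_mem (Ideal.mul_mem_left _ _ hh) hg
  inv_mem' {g} hg := by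
    have hinv : of ℚ G g⁻¹ - 1 = -(of ℚ G g⁻¹ * (of ℚ G g - 1)) := by
      rw [mul_sub, ← map_mul, inv_mul_cancel, map_one, mul_one, neg_sub]
    rw [Set.mem_ofPred_eq, hinv]
    exact neg_mem (Ideal.mul_mem_left _ _ hg)

theorem mem_rationalDimensionSubgroup {k : ℕ} {g : G} :
    g ∈ rationalDimensionSubgroup G k ↔ of ℚ G g - 1 ∈ augmentationIdeal G ^ k :=
  Iff.rfl

theorem rationalDimensionSubgroup_zero : rationalDimensionSubgroup G 0 = ⊤ :=
  eq_top_iff.2 fun g _ => by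
    rw [mem_rationalDimensionSubgroup, Submodule.pow_zero, Ideal.one_eq_top]
    exact Submodule.mem_top

theorem rationalDimensionSubgroup_one : rationalDimensionSubgroup G 1 = ⊤ :=
  eq_top_iff.2 fun g _ => by
    rw [mem_rationalDimensionSubgroup, Submodule.pow_one]
    exact of_sub_one_mem_augmentationIdeal g

theorem map_mem_rationalDimensionSubgroup (f : G →* H) {k : ℕ} {g : G}
    (hg : g ∈ rationalDimensionSubgroup G k) : f g ∈ rationalDimensionSubgroup H k := by
  rw [mem_rationalDimensionSubgroup, ← mapDomainAlgHom_of, ← map_one (mapDomainAlgHom ℚ ℚ f),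
    ← map_sub]
  exact map_mem_augmentationIdeal_pow f hg

instance (k : ℕ) : (rationalDimensionSubgroup G k).Normal where
  conj_mem _ hg h := map_mem_rationalDimensionSubgroup (MulAut.conj h).toMonoidHom hg

theorem commutator_rationalDimensionSubgroup_le (k l : ℕ) :
    ⁅rationalDimensionSubgroup G k, rationalDimensionSubgroup G l⁆ ≤
      rationalDimensionSubgroup G (k + l) := by
  refine Subgroup.commutator_le.2 fun g hg h hh => ?_
  have hcomm : of ℚ G (g * h * g⁻¹ * h⁻¹) - 1 =
      ((of ℚ G g - 1) * (of ℚ G h - 1) - (of ℚ G h - 1) * (of ℚ G g - 1)) *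
        of ℚ G (g⁻¹ * h⁻¹) := by
    have hdiff : (of ℚ G g - 1) * (of ℚ G h - 1) - (of ℚ G h - 1) * (of ℚ G g - 1) =
        of ℚ G (g * h) - of ℚ G (h * g) := by simp only [map_mul]; noncomm_ring
    rw [hdiff, sub_mul, ← map_mul, ← map_mul, mul_assoc h g, mul_inv_cancel_left, mul_inv_cancel,
      map_one, mul_assoc (g * h)]
  rw [mem_rationalDimensionSubgroup, commutatorElement_def, hcomm]
  refine Ideal.mul_mem_right _ _ (sub_mem ?_ ?_)
  · rw [Ideal.IsTwoSided.pow_add]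
    exact Ideal.mul_mem_mul hg hh
  · rw [add_comm, Ideal.IsTwoSided.pow_add]
    exact Ideal.mul_mem_mul hh hg

theorem commutator_le_rationalDimensionSubgroup_two :
    commutator G ≤ rationalDimensionSubgroup G 2 := by
  simpa only [rationalDimensionSubgroup_one, commutator_def] using
    commutator_rationalDimensionSubgroup_le (G := G) 1 1

theorem of_pow_sub_one_sub_nsmul_mem_augmentationIdeal_pow {k : ℕ} {g : G}
    (hg : g ∈ rationalDimensionSubgroup G (k + 1)) (m : ℕ) :
    of ℚ G (g ^ m) - 1 - m • (of ℚ G g - 1) ∈ augmentationIdeal G ^ (k + 2) := by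
  induction m with
  | zero => rw [pow_zero, map_one, sub_self, zero_nsmul, sub_zero]; exact zero_mem _
  | succ m ih =>
    have hsplit : of ℚ G (g ^ (m + 1)) - 1 - (m + 1) • (of ℚ G g - 1) =
        (of ℚ G (g ^ m) - 1) * (of ℚ G g - 1) + (of ℚ G (g ^ m) - 1 - m • (of ℚ G g - 1)) := by
      rw [pow_succ, map_mul, succ_nsmul]; noncomm_ring
    rw [hsplit]
    refine add_mem ?_ ih
    rw [Ideal.IsTwoSided.pow_succ]
    exact Ideal.mul_mem_mul (of_sub_one_mem_augmentationIdeal _) hg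

theorem mem_rationalDimensionSubgroup_of_pow_mem {k m : ℕ} (hm : m ≠ 0) {g : G}
    (hg : g ∈ rationalDimensionSubgroup G (k + 1))
    (hgm : g ^ m ∈ rationalDimensionSubgroup G (k + 2)) :
    g ∈ rationalDimensionSubgroup G (k + 2) := by
  have hsmul : (m : ℚ) • (of ℚ G g - 1) ∈ augmentationIdeal G ^ (k + 2) := by
    rw [Nat.cast_smul_eq_nsmul]
    simpa only [sub_sub_cancel] using
      sub_mem (mem_rationalDimensionSubgroup.1 hgm)
        (of_pow_sub_one_sub_nsmul_mem_augmentationIdeal_pow hg m)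
  rw [mem_rationalDimensionSubgroup, ← inv_smul_smul₀ (Nat.cast_ne_zero.2 hm : (m : ℚ) ≠ 0)
    (of ℚ G g - 1)]
  exact Submodule.smul_of_tower_mem _ _ hsmul

end DimensionSubgroup

section IAAutomorphism

open MonoidAlgebra (of lift_of mapDomainAlgHom)

variable {G : Type*} [Group G]

/-- The action of the automorphisms of `G` on the abelianization of `G`. The automorphisms in its
kernel are the IA automorphisms. -/
def abelianizationAut (G : Type*) [Group G] : MulAut G →* MulAut (Abelianization G) where
  toFun A := A.abelianizationCongr
  map_one' := by ext x; induction x using QuotientGroup.induction_on; rfl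
  map_mul' A B := by ext x; induction x using QuotientGroup.induction_on; rfl

theorem abelianizationAut_apply_of (A : MulAut G) (g : G) :
    abelianizationAut G A (Abelianization.of g) = Abelianization.of (A g) :=
  rfl

theorem abelianizationAut_conj (u : G) : abelianizationAut G (MulAut.conj u) = 1 := by
  ext x
  induction x using QuotientGroup.induction_on with
  | H g =>
    change Abelianization.of (u * g * u⁻¹) = Abelianization.of g
    rw [map_mul, map_mul, map_inv, mul_inv_cancel_comm]

theorem apply_mul_inv_mem_commutator {A : MulAut G} (hA : abelianizationAut G A = 1) (g : G) :
    A g * g⁻¹ ∈ commutator G := by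
  have hof : Abelianization.of (A g) = Abelianization.of g := by
    rw [← abelianizationAut_apply_of, hA, MulAut.one_apply]
  rw [← Abelianization.ker_of, MonoidHom.mem_ker, map_mul, map_inv, hof, mul_inv_cancel]

theorem of_sub_of_mem_augmentationIdeal_pow_iff {k : ℕ} {g h : G} :
    of ℚ G h - of ℚ G g ∈ augmentationIdeal G ^ k ↔ h * g⁻¹ ∈ rationalDimensionSubgroup G k := by
  have hdiv : of ℚ G h - of ℚ G g = (of ℚ G (h * g⁻¹) - 1) * of ℚ G g := by
    rw [sub_mul, ← map_mul, inv_mul_cancel_right, one_mul]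
  have hdiv' : of ℚ G (h * g⁻¹) - 1 = (of ℚ G h - of ℚ G g) * of ℚ G g⁻¹ := by
    rw [sub_mul, ← map_mul, ← map_mul, mul_inv_cancel, map_one]
  constructor <;> intro hx
  · rw [mem_rationalDimensionSubgroup, hdiv']
    exact Ideal.mul_mem_right _ _ hx
  · rw [hdiv]
    exact Ideal.mul_mem_right _ _ hx

theorem map_sub_self_mem_augmentationIdeal_pow_succ {A : MulAut G}
    (hA : abelianizationAut G A = 1) {k : ℕ} {x : MonoidAlgebra ℚ G}
    (hx : x ∈ augmentationIdeal G ^ k) :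
    mapDomainAlgHom ℚ ℚ A.toMonoidHom x - x ∈ augmentationIdeal G ^ (k + 1) := by
  set f := mapDomainAlgHom ℚ ℚ A.toMonoidHom
  have hf_sq (y : MonoidAlgebra ℚ G) : f y - y ∈ augmentationIdeal G ^ 2 := by
    induction y using MonoidAlgebra.induction_on with
    | of g =>
      rw [mapDomainAlgHom_of, of_sub_of_mem_augmentationIdeal_pow_iff]
      exact commutator_le_rationalDimensionSubgroup_two (apply_mul_inv_mem_commutator hA g)
    | add y z hy hz =>
      rw [map_add, add_sub_add_comm]
      exact add_mem hy hz
    | smul r y hy =>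
      rw [map_smul, ← smul_sub]
      exact Submodule.smul_of_tower_mem _ r hy
  induction k generalizing x with
  | zero => exact Ideal.pow_le_pow_right one_le_two (hf_sq x)
  | succ k ih =>
    rw [Ideal.IsTwoSided.pow_succ] at hx
    induction hx using Submodule.mul_induction_on' with
    | mem_mul_mem m hm v hv =>
      have hsplit : f (m * v) - m * v = (f m - m) * f v + m * (f v - v) := by
        rw [map_mul]; noncomm_ring
      rw [hsplit]
      refine add_mem ?_ ?_
      · rw [add_assoc, add_comm k, Ideal.IsTwoSided.pow_add]
        exact Ideal.mul_mem_mul (hf_sq m) (map_mem_augmentationIdeal_pow _ hv)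
      · rw [Ideal.IsTwoSided.pow_succ]
        exact Ideal.mul_mem_mul hm (ih hv)
    | add x _ y _ hx hy =>
      rw [map_add, add_sub_add_comm]
      exact add_mem hx hy

theorem apply_mul_inv_mem_rationalDimensionSubgroup_succ {A : MulAut G}
    (hA : abelianizationAut G A = 1) {k : ℕ} {g : G} (hg : g ∈ rationalDimensionSubgroup G k) :
    A g * g⁻¹ ∈ rationalDimensionSubgroup G (k + 1) := by
  have h := map_sub_self_mem_augmentationIdeal_pow_succ hA (mem_rationalDimensionSubgroup.1 hg)
  rwa [map_sub, map_one, sub_sub_sub_cancel_right, mapDomainAlgHom_of,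
    of_sub_of_mem_augmentationIdeal_pow_iff] at h

theorem eq_one_of_apply_eq_mul_pow_inv
    (hG : ⨅ k, rationalDimensionSubgroup G k = ⊥) {A C : MulAut G}
    (hA : abelianizationAut G A = 1) {w : G} {m : ℕ} (hm : m ≠ 0)
    (hw : A (C w) = C w * (w ^ m)⁻¹) : w = 1 := by
  have hmem (k : ℕ) : w ∈ rationalDimensionSubgroup G (k + 1) := by
    induction k with
    | zero => simp [rationalDimensionSubgroup_one]
    | succ k ih =>
      have hC : C w ∈ rationalDimensionSubgroup G (k + 1) :=
        map_mem_rationalDimensionSubgroup C.toMonoidHom ih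
      have hconj := apply_mul_inv_mem_rationalDimensionSubgroup_succ hA hC
      rw [hw, Subgroup.Normal.mem_comm_iff inferInstance, inv_mul_cancel_left, inv_mem_iff] at hconj
      exact mem_rationalDimensionSubgroup_of_pow_mem hm ih hconj
  rw [← Subgroup.mem_bot, ← hG, Subgroup.mem_iInf]
  rintro (_ | k)
  · exact rationalDimensionSubgroup_zero.ge (Subgroup.mem_top w)
  · exact hmem k

end IAAutomorphism

section ResidualTriviality

open MonoidAlgebra (lift_of)
open Monoid

theorem lift_apply_mem_of_mem_augmentationIdeal_pow {G M : Type*} [Group G] [AddCommGroup M]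
    [Module ℚ M] {ρ : G →* Module.End ℚ M} {V : ℕ → Submodule ℚ M}
    (hV : ∀ g j, ∀ v ∈ V (j + 1), ρ g v - v ∈ V j) {k j : ℕ} {x : MonoidAlgebra ℚ G}
    (hx : x ∈ augmentationIdeal G ^ (k + 1)) {v : M} (hv : v ∈ V (j + (k + 1))) :
    MonoidAlgebra.lift ℚ (Module.End ℚ M) G ρ x v ∈ V j := by
  set R := MonoidAlgebra.lift ℚ (Module.End ℚ M) G ρ
  have hR_sub (y : MonoidAlgebra ℚ G) {i : ℕ} {u : M} (hu : u ∈ V (i + 1)) :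
      R y u - MonoidAlgebra.lift ℚ ℚ G 1 y • u ∈ V i := by
    induction y using MonoidAlgebra.induction_on with
    | of g => simpa only [R, lift_of, MonoidHom.one_apply, one_smul] using hV g i u hu
    | add y z hy hz =>
      rw [map_add, map_add, LinearMap.add_apply, add_smul, add_sub_add_comm]
      exact add_mem hy hz
    | smul r y hy =>
      rw [map_smul, map_smul, LinearMap.smul_apply, smul_assoc, ← smul_sub]
      exact Submodule.smul_mem _ r hy
  have hR {y : MonoidAlgebra ℚ G} (hy : y ∈ augmentationIdeal G) {i : ℕ} {u : M}
      (hu : u ∈ V (i + 1)) : R y u ∈ V i := by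
    have hε : MonoidAlgebra.lift ℚ ℚ G 1 y = 0 := hy
    simpa only [hε, zero_smul, sub_zero] using hR_sub y hu
  induction k generalizing j x v with
  | zero => exact hR (by rwa [zero_add, Submodule.pow_one] at hx) hv
  | succ k ih =>
    rw [Ideal.IsTwoSided.pow_succ] at hx
    induction hx using Submodule.mul_induction_on' with
    | mem_mul_mem m hm y hy =>
      rw [map_mul, Module.End.mul_apply]
      exact hR hm (ih hy (by rwa [add_assoc, add_comm 1]))
    | add y _ z _ hy hz =>
      rw [map_add, LinearMap.add_apply]
      exact add_mem hy hz

theorem apply_eq_self_of_mem_rationalDimensionSubgroup {G M : Type*} [Group G] [AddCommGroup M]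
    [Module ℚ M] {ρ : G →* Module.End ℚ M} {V : ℕ → Submodule ℚ M} (hV₀ : V 0 = ⊥)
    (hV : ∀ g j, ∀ v ∈ V (j + 1), ρ g v - v ∈ V j) {k : ℕ} {g : G}
    (hg : g ∈ rationalDimensionSubgroup G (k + 1)) {v : M} (hv : v ∈ V (k + 1)) : ρ g v = v := by
  have hmem := lift_apply_mem_of_mem_augmentationIdeal_pow hV (j := 0) hg (by rwa [zero_add])
  rwa [hV₀, Submodule.mem_bot, map_sub, lift_of, map_one, LinearMap.sub_apply,
    Module.End.one_apply, sub_eq_zero] at hmem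

/-- For `T` of square zero in a `ℚ`-algebra, the one-parameter group `c ↦ 1 + c T`. -/
def oneAddSMul {A : Type*} [Ring A] [Algebra ℚ A] (T : A) (hT : T * T = 0) :
    Multiplicative ℚ →* A where
  toFun c := 1 + c.toAdd • T
  map_one' := by simp
  map_mul' c d := by simp [mul_add, add_mul, hT, add_smul, add_assoc, add_comm (c.toAdd • T)]

section Magnus

variable {ι : Type*} [DecidableEq ι]

/-- The backward shift of a sequence of rationals, restricted to the positions labelled `i`. -/
def labelledShift (l : ℕ → Option ι) (i : ι) : Module.End ℚ (ℕ → ℚ) where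
  toFun f j := if l j = some i then f (j + 1) else 0
  map_add' f g := by ext j; by_cases h : l j = some i <;> simp [h]
  map_smul' c f := by ext j; by_cases h : l j = some i <;> simp [h]

theorem labelledShift_apply (l : ℕ → Option ι) (i : ι) (f : ℕ → ℚ) (j : ℕ) :
    labelledShift l i f j = if l j = some i then f (j + 1) else 0 :=
  rfl

theorem labelledShift_mul_self {l : ℕ → Option ι} (hl : ∀ j i, l j = some i → l (j + 1) ≠ some i)
    (i : ι) : labelledShift l i * labelledShift l i = 0 := by
  ext1 f
  funext j
  by_cases h : l j = some i <;> simp [labelledShift_apply, h, hl j i]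

variable {G : ι → Type*} [∀ i, Group (G i)]

/-- The representation of a free product on sequences of rationals in which `g ∈ G i` acts as
`1 + χ(g) Tᵢ`, where `Tᵢ` is the shift restricted to the positions labelled `i`. It is the Magnus
representation read off along a single word, whose letters label the positions. -/
def magnusRep (χ : ∀ i, G i →* Multiplicative ℚ) (l : ℕ → Option ι)
    (hl : ∀ j i, l j = some i → l (j + 1) ≠ some i) : CoprodI G →* Module.End ℚ (ℕ → ℚ) :=
  CoprodI.lift fun i => (oneAddSMul (labelledShift l i) (labelledShift_mul_self hl i)).comp (χ i)

variable {χ : ∀ i, G i →* Multiplicative ℚ} {l : ℕ → Option ι}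
  {hl : ∀ j i, l j = some i → l (j + 1) ≠ some i}

theorem magnusRep_of_apply {i : ι} (g : G i) (f : ℕ → ℚ) (j : ℕ) :
    magnusRep χ l hl (CoprodI.of g) f j =
      f j + (χ i g).toAdd * if l j = some i then f (j + 1) else 0 := by
  rw [magnusRep, CoprodI.lift_of]
  rfl

/-- The sequences of rationals supported in the first `k` positions. -/
def supportedBelow (k : ℕ) : Submodule ℚ (ℕ → ℚ) where
  carrier := {f | ∀ m, k ≤ m → f m = 0}
  zero_mem' _ _ := rfl
  add_mem' hf hg m hm := by rw [Pi.add_apply, hf m hm, hg m hm, add_zero]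
  smul_mem' c f hf m hm := by rw [Pi.smul_apply, hf m hm, smul_zero]

theorem supportedBelow_mono : Monotone supportedBelow :=
  fun _ _ h _ hf m hm => hf m (h.trans hm)

theorem supportedBelow_zero : supportedBelow 0 = ⊥ :=
  (Submodule.eq_bot_iff _).2 fun _ hf => funext fun m => hf m m.zero_le

theorem magnusRep_sub_self_mem_supportedBelow (g : CoprodI G) (k : ℕ) (f : ℕ → ℚ)
    (hf : f ∈ supportedBelow (k + 1)) : magnusRep χ l hl g f - f ∈ supportedBelow k := by
  induction g using CoprodI.induction_on generalizing f with
  | one => simp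
  | of i g =>
    intro m hm
    rw [Pi.sub_apply, magnusRep_of_apply, hf (m + 1) (by lia), ite_self, mul_zero, add_zero,
      sub_self]
  | mul g h hg hh =>
    have hmem : magnusRep χ l hl h f ∈ supportedBelow (k + 1) := by
      simpa using add_mem (supportedBelow_mono k.le_succ (hh f hf)) hf
    simpa using add_mem (hg _ hmem) (hh f hf)

theorem magnusRep_prod_single {L : List (Σ i, G i)} (hL : ∀ p ∈ L, χ p.1 p.2 ≠ 1) {j : ℕ}
    (hlabel : ∀ k (hk : k < L.length), l (j + k) = some L[k].1) :
    (∀ m < j, magnusRep χ l hl (L.map fun p => CoprodI.of p.2).prod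
        (Pi.single (j + L.length) 1) m = 0) ∧
      magnusRep χ l hl (L.map fun p => CoprodI.of p.2).prod (Pi.single (j + L.length) 1) j ≠ 0 := by
  induction L generalizing j with
  | nil => simp +contextual [ne_of_lt]
  | cons p L ih =>
    obtain ⟨hbelow, hat⟩ := ih (fun q hq => hL q (List.mem_cons_of_mem p hq)) (j := j + 1)
      fun k hk => by
        rw [add_assoc, add_comm 1, hlabel (k + 1) (Nat.succ_lt_succ hk), List.getElem_cons_succ]
    rw [List.length_cons, ← add_assoc, add_right_comm, List.map_cons, List.prod_cons, map_mul,
      Module.End.mul_apply]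
    set f := magnusRep χ l hl (L.map fun p => CoprodI.of p.2).prod
      (Pi.single (j + 1 + L.length) 1)
    constructor
    · intro m hm
      rw [magnusRep_of_apply, hbelow m (by lia), hbelow (m + 1) (by lia), ite_self, mul_zero,
        add_zero]
    · have hj : l j = some p.1 := hlabel 0 (by simp)
      rw [magnusRep_of_apply, if_pos hj, hbelow j (by lia), zero_add]
      exact mul_ne_zero (fun h => hL p List.mem_cons_self h) hat

end Magnus

theorem iInf_rationalDimensionSubgroup_coprodI_eq_bot {ι : Type*} {G : ι → Type*}
    [∀ i, Group (G i)] (χ : ∀ i, G i →* Multiplicative ℚ) (hχ : ∀ i, Function.Injective (χ i)) :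
    ⨅ k, rationalDimensionSubgroup (CoprodI G) k = ⊥ := by
  classical
  refine (Subgroup.eq_bot_iff_forall _).2 fun g hg => ?_
  obtain ⟨w, rfl⟩ : ∃ w : CoprodI.Word G, w.prod = g := CoprodI.Word.equiv.symm.surjective g
  rcases hr : w.toList.length with _ | r
  · rw [CoprodI.Word.prod, List.length_eq_zero_iff.1 hr, List.map_nil, List.prod_nil]
  let l : ℕ → Option ι := fun j => (w.toList.map Sigma.fst)[j]?
  have hchain : (w.toList.map Sigma.fst).IsChain (· ≠ ·) := (List.isChain_map _).2 w.chain_ne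
  have hl (j : ℕ) (i : ι) (hj : l j = some i) : l (j + 1) ≠ some i := fun hj' => by
    obtain ⟨_, hi⟩ := List.getElem?_eq_some_iff.1 hj
    obtain ⟨hlt, hi'⟩ := List.getElem?_eq_some_iff.1 hj'
    exact hchain.getElem j hlt (hi.trans hi'.symm)
  have hlabel (k : ℕ) (hk : k < w.toList.length) : l (0 + k) = some w.toList[k].1 := by
    simp [l, hk]
  have hletter (q) (hq : q ∈ w.toList) : χ q.1 q.2 ≠ 1 := fun h =>
    w.ne_one q hq ((hχ q.1) (h.trans (map_one _).symm))
  have hfixed : magnusRep χ l hl w.prod (Pi.single (r + 1) 1) = Pi.single (r + 1) 1 :=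
    apply_eq_self_of_mem_rationalDimensionSubgroup supportedBelow_zero
      magnusRep_sub_self_mem_supportedBelow (Subgroup.mem_iInf.1 hg (r + 2))
      fun m hm => Pi.single_eq_of_ne (by lia) 1
  refine absurd ?_ (magnusRep_prod_single (hl := hl) hletter hlabel).2
  rw [← CoprodI.Word.prod, zero_add, hr, hfixed, Pi.single_eq_of_ne (by lia)]

theorem iInf_rationalDimensionSubgroup_freeGroup_eq_bot (α : Type*) :
    ⨅ k, rationalDimensionSubgroup (FreeGroup α) k = ⊥ := by
  classical
  let χ : FreeGroup Unit →* Multiplicative ℚ :=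
    (AddMonoidHom.toMultiplicative (Int.castAddHom ℚ)).comp
      FreeGroup.mulEquivIntOfUnique.toMonoidHom
  have hχ : Function.Injective χ :=
    Function.Injective.comp (g := AddMonoidHom.toMultiplicative (Int.castAddHom ℚ))
      (Int.cast_injective (α := ℚ)) FreeGroup.mulEquivIntOfUnique.injective
  refine (Subgroup.eq_bot_iff_forall _).2 fun w hw => ?_
  have hmem : freeGroupEquivCoprodI w ∈
      ⨅ k, rationalDimensionSubgroup (CoprodI fun _ : α => FreeGroup Unit) k :=
    Subgroup.mem_iInf.2 fun k => map_mem_rationalDimensionSubgroup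
      (freeGroupEquivCoprodI (ι := α)).toMonoidHom (Subgroup.mem_iInf.1 hw k)
  rwa [iInf_rationalDimensionSubgroup_coprodI_eq_bot (fun _ => χ) (fun _ => hχ), Subgroup.mem_bot,
    MulEquiv.map_eq_one_iff] at hmem

end ResidualTriviality

section SemidirectProduct

/-- Two elements of a group are braided if they satisfy the Artin relation of length three. -/
def IsBraided {G : Type*} [Group G] (a b : G) : Prop :=
  a * b * a = b * a * b

theorem IsBraided.eq {G : Type*} [Group G] {a b : G} (h : IsBraided a b) :
    a * b * a = b * a * b :=
  h

theorem IsBraided.symm {G : Type*} [Group G] {a b : G} (h : IsBraided a b) : IsBraided b a :=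
  Eq.symm h

theorem IsBraided.map {G H : Type*} [Group G] [Group H] {a b : G} (h : IsBraided a b)
    (F : G →* H) : IsBraided (F a) (F b) := by
  simpa only [IsBraided, map_mul] using congrArg F h.eq

theorem IsBraided.mul_mul_mul_inv_eq {G : Type*} [Group G] {a b : G} (h : IsBraided a b) :
    b * a * b * (b * a)⁻¹ = a := by
  rw [← h.eq, mul_assoc a, mul_inv_cancel_right]

theorem mul_conj_mul_inv_of_isBraided {G : Type*} [Group G] {a b c : G} (hac : IsBraided a c)
    (hbc : IsBraided b c) :
    a * (c * (a * b⁻¹) * c⁻¹) * a⁻¹ = c * (a * b⁻¹) * c⁻¹ * (a * b⁻¹)⁻¹ := by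
  have hcb : c * b⁻¹ * c⁻¹ = b⁻¹ * c⁻¹ * b := by
    calc c * b⁻¹ * c⁻¹ = b⁻¹ * c⁻¹ * (c * b * c) * b⁻¹ * c⁻¹ := by group
      _ = b⁻¹ * c⁻¹ * b := by rw [← hbc.eq]; group
  calc a * (c * (a * b⁻¹) * c⁻¹) * a⁻¹ = a * c * a * b⁻¹ * c⁻¹ * a⁻¹ := by group
    _ = c * a * (c * b⁻¹ * c⁻¹) * a⁻¹ := by rw [hac.eq]; group
    _ = c * (a * b⁻¹) * c⁻¹ * (a * b⁻¹)⁻¹ := by rw [hcb]; group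

theorem sq_mul_conj_mul_inv_of_isBraided {G : Type*} [Group G] {a b c : G} (hab : Commute a b)
    (hac : IsBraided a c) (hbc : IsBraided b c) :
    a ^ 2 * (c * (a * b⁻¹) * c⁻¹) * (a ^ 2)⁻¹ =
      c * (a * b⁻¹) * c⁻¹ * ((a * b⁻¹) ^ 2)⁻¹ := by
  have hw : Commute a (a * b⁻¹) := (Commute.refl a).mul_right hab.inv_right
  calc a ^ 2 * (c * (a * b⁻¹) * c⁻¹) * (a ^ 2)⁻¹
      = a * (a * (c * (a * b⁻¹) * c⁻¹) * a⁻¹) * a⁻¹ := by rw [pow_two]; group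
    _ = a * (c * (a * b⁻¹) * c⁻¹ * (a * b⁻¹)⁻¹) * a⁻¹ := by
      rw [mul_conj_mul_inv_of_isBraided hac hbc]
    _ = a * (c * (a * b⁻¹) * c⁻¹) * a⁻¹ * (a * (a * b⁻¹)⁻¹ * a⁻¹) := by group
    _ = c * (a * b⁻¹) * c⁻¹ * ((a * b⁻¹) ^ 2)⁻¹ := by
      rw [mul_conj_mul_inv_of_isBraided hac hbc, hw.inv_right.eq, mul_inv_cancel_right, mul_assoc,
        ← mul_inv_rev, pow_two]

open SemidirectProduct

variable {N G : Type*} [Group N] [Group G] {ρ : G →* MulAut N}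

/-- The conjugation action of `N ⋊[ρ] G` on its normal factor `N`. -/
def conjNormalFactor : N ⋊[ρ] G →* MulAut N :=
  SemidirectProduct.lift MulAut.conj ρ fun g => by ext n m; simp

theorem inl_conjNormalFactor_apply (x : N ⋊[ρ] G) (n : N) :
    inl (conjNormalFactor x n) = x * inl n * x⁻¹ := by
  rw [← inl_left_mul_inr_right x, map_mul, conjNormalFactor, lift_inl, lift_inr,
    MulAut.mul_apply, MulAut.conj_apply, map_mul, map_mul, inl_aut, map_inv, map_inv]
  group

theorem abelianizationAut_conjNormalFactor (x : N ⋊[ρ] G) :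
    abelianizationAut N (conjNormalFactor x) = abelianizationAut N (ρ x.right) := by
  rw [← inl_left_mul_inr_right x, conjNormalFactor, map_mul, lift_inl, lift_inr, map_mul,
    abelianizationAut_conj, one_mul, mul_right, right_inl, right_inr, one_mul]

theorem eq_of_commute_of_isBraided (hN : ⨅ k, rationalDimensionSubgroup N k = ⊥) {a b c : N ⋊[ρ] G}
    (hright : a.right = b.right) (hIA : abelianizationAut N (ρ a.right) ^ 2 = 1)
    (hab : Commute a b) (hac : IsBraided a c) (hbc : IsBraided b c) : a = b := by
  obtain ⟨w, hw⟩ : ∃ w : N, inl w = a * b⁻¹ :=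
    ⟨(a * b⁻¹).left, by rw [← inl_left_mul_inr_right (a * b⁻¹)]; simp [hright]⟩
  have hA : abelianizationAut N (conjNormalFactor (a ^ 2)) = 1 := by
    rw [map_pow, map_pow, abelianizationAut_conjNormalFactor, hIA]
  have hconj : conjNormalFactor (a ^ 2) (conjNormalFactor c w) =
      conjNormalFactor c w * (w ^ 2)⁻¹ := by
    rw [← inl_inj (φ := ρ), map_mul, inl_conjNormalFactor_apply, inl_conjNormalFactor_apply,
      map_inv, map_pow, hw, sq_mul_conj_mul_inv_of_isBraided hab hac hbc]
  rw [← mul_inv_eq_one, ← hw, eq_one_of_apply_eq_mul_pow_inv hN hA two_ne_zero hconj, map_one]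

end SemidirectProduct

section ArtinRepresentation

theorem mulAut_freeGroup_ext {α : Type*} {A B : MulAut (FreeGroup α)}
    (h : ∀ i, A (FreeGroup.of i) = B (FreeGroup.of i)) : A = B :=
  MulEquiv.toMonoidHom_injective (FreeGroup.ext_hom _ _ h)

variable {α : Type*} [DecidableEq α]

/-- The Artin automorphism of the free group on `α` given by `x_a ↦ x_b`, `x_b ↦ x_b⁻¹ x_a x_b`
and fixing the other generators; it is the identity if `a = b`. -/
def artinAut (a b : α) : MulAut (FreeGroup α) :=
  MonoidHom.toMulEquiv
    (FreeGroup.lift fun i =>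
      if i = a then FreeGroup.of b
      else if i = b then (FreeGroup.of b)⁻¹ * FreeGroup.of a * FreeGroup.of b
      else FreeGroup.of i)
    (FreeGroup.lift fun i =>
      if i = b then FreeGroup.of a
      else if i = a then FreeGroup.of a * FreeGroup.of b * (FreeGroup.of a)⁻¹
      else FreeGroup.of i)
    (by ext i; by_cases ha : i = a <;> by_cases hb : i = b <;> simp_all [mul_assoc])
    (by ext i; by_cases ha : i = a <;> by_cases hb : i = b <;> simp_all [mul_assoc])

theorem artinAut_apply_of (a b i : α) : artinAut a b (FreeGroup.of i) =
    if i = a then FreeGroup.of b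
    else if i = b then (FreeGroup.of b)⁻¹ * FreeGroup.of a * FreeGroup.of b
    else FreeGroup.of i := by
  simp [artinAut]

theorem artinAut_apply_left (a b : α) : artinAut a b (FreeGroup.of a) = FreeGroup.of b := by
  rw [artinAut_apply_of, if_pos rfl]

theorem artinAut_apply_right {a b : α} (h : a ≠ b) : artinAut a b (FreeGroup.of b) =
    (FreeGroup.of b)⁻¹ * FreeGroup.of a * FreeGroup.of b := by
  rw [artinAut_apply_of, if_neg h.symm, if_pos rfl]

theorem artinAut_apply_of_ne {a b i : α} (ha : i ≠ a) (hb : i ≠ b) :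
    artinAut a b (FreeGroup.of i) = FreeGroup.of i := by
  rw [artinAut_apply_of, if_neg ha, if_neg hb]

theorem commute_artinAut {a b c d : α} (hac : a ≠ c) (had : a ≠ d) (hbc : b ≠ c) (hbd : b ≠ d) :
    Commute (artinAut a b) (artinAut c d) := by
  refine mulAut_freeGroup_ext fun i => ?_
  simp only [MulAut.mul_apply]
  by_cases hia : i = a
  · subst hia
    simp [artinAut_apply_of, *]
  by_cases hib : i = b
  · subst hib
    simp [artinAut_apply_of, *]
  by_cases hic : i = c
  · subst hic
    simp [artinAut_apply_of, hac.symm, hbc.symm, had.symm, hbd.symm, *]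
  by_cases hid : i = d
  · subst hid
    simp [artinAut_apply_of, hac.symm, hbc.symm, had.symm, hbd.symm, *]
  simp [artinAut_apply_of, *]

theorem isBraided_artinAut {a b c : α} (hab : a ≠ b) (hac : a ≠ c) (hbc : b ≠ c) :
    IsBraided (artinAut a b) (artinAut b c) := by
  refine mulAut_freeGroup_ext fun i => ?_
  simp only [MulAut.mul_apply]
  by_cases hia : i = a
  · subst hia
    simp [artinAut_apply_of, hac.symm, hbc.symm, *]
  by_cases hib : i = b
  · subst hib
    simp [artinAut_apply_of, hac.symm, hbc.symm, *]
  by_cases hic : i = c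
  · subst hic
    simp [artinAut_apply_of, hab.symm, hac.symm, hbc.symm, mul_assoc, *]
  simp [artinAut_apply_of, *]

theorem abelianizationAut_artinAut_sq (a b : α) :
    abelianizationAut (FreeGroup α) (artinAut a b) ^ 2 = 1 := by
  refine MulEquiv.toMonoidHom_injective
    (Abelianization.hom_ext _ _ (FreeGroup.ext_hom _ _ fun i => ?_))
  change abelianizationAut _ (artinAut a b)
    (abelianizationAut _ (artinAut a b) (Abelianization.of _)) = Abelianization.of _
  rw [abelianizationAut_apply_of, abelianizationAut_apply_of]
  rcases eq_or_ne a b with rfl | hab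
  · rcases eq_or_ne i a with rfl | hi <;> simp [artinAut_apply_of, *]
  rcases eq_or_ne i a with rfl | hia
  · simp [artinAut_apply_left, artinAut_apply_right hab]
  rcases eq_or_ne i b with rfl | hib
  · simp [artinAut_apply_left, artinAut_apply_right hab]
  · simp [artinAut_apply_of_ne hia hib]

theorem map_braidWord_eq_one_iff {α G : Type*} [Group G] (F : FreeGroup α →* G)
    (a b : FreeGroup α) : F (braidWord a b) = 1 ↔ IsBraided (F a) (F b) := by
  simp only [braidWord, IsBraided, map_mul, map_inv, mul_inv_eq_one]

theorem map_commWord_eq_one_iff {α G : Type*} [Group G] (F : FreeGroup α →* G)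
    (a b : FreeGroup α) : F (commWord a b) = 1 ↔ Commute (F a) (F b) := by
  rw [commWord, map_mul, map_mul, map_mul, map_inv, map_inv, mul_inv_eq_one, mul_inv_eq_iff_eq_mul]
  rfl

/-- The elements `a 0, …, a (k - 1)` of a group satisfy the relations of the Artin generators of
the braid group on `k + 1` strands. -/
structure BraidRelations {k : ℕ} {G : Type*} [Group G] (a : Fin k → G) : Prop where
  isBraided : ∀ i j : Fin k, (i : ℕ) + 1 = j → IsBraided (a i) (a j)
  commute : ∀ i j : Fin k, (i : ℕ) + 2 ≤ j → Commute (a i) (a j)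

theorem forall_mem_braidRels_map_eq_one_iff {k : ℕ} {G : Type*} [Group G]
    (F : FreeGroup (Fin k) →* G) :
    (∀ r ∈ braidRels k, F r = 1) ↔ BraidRelations fun i => F (FreeGroup.of i) := by
  constructor
  · exact fun h => {
      isBraided := fun i j hij => (map_braidWord_eq_one_iff F _ _).1 (h _ ⟨i, j, .inl ⟨hij, rfl⟩⟩)
      commute := fun i j hij => (map_commWord_eq_one_iff F _ _).1 (h _ ⟨i, j, .inr ⟨hij, rfl⟩⟩) }
  · rintro h r ⟨i, j, ⟨hij, rfl⟩ | ⟨hij, rfl⟩⟩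
    · exact (map_braidWord_eq_one_iff F _ _).2 (h.isBraided i j hij)
    · exact (map_commWord_eq_one_iff F _ _).2 (h.commute i j hij)

theorem BraidRelations.forall_mem_lift_eq_one {k : ℕ} {G : Type*} [Group G] {a : Fin k → G}
    (ha : BraidRelations a) : ∀ r ∈ braidRels k, FreeGroup.lift a r = 1 :=
  (forall_mem_braidRels_map_eq_one_iff _).2 (by simpa only [FreeGroup.lift_apply_of] using ha)

theorem braidRelations_of (k : ℕ) :
    BraidRelations (PresentedGroup.of : Fin k → PresentedGroup (braidRels k)) :=
  (forall_mem_braidRels_map_eq_one_iff (PresentedGroup.mk _)).1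
    fun _ => PresentedGroup.one_of_mem

theorem braidRelations_artinAut (n : ℕ) : BraidRelations fun k : Fin (n - 1) =>
    artinAut (⟨k, by lia⟩ : Fin n) ⟨k + 1, by lia⟩ where
  isBraided i j hij := by
    simp only [← hij]
    apply isBraided_artinAut <;> simp only [ne_eq, Fin.mk.injEq] <;> lia
  commute i j hij := by
    apply commute_artinAut <;> simp only [ne_eq, Fin.mk.injEq] <;> lia

/-- The Artin representation of the braid group on `n` strands by automorphisms of the free group
of rank `n`. -/
def artinRep (n : ℕ) : PresentedGroup (braidRels (n - 1)) →* MulAut (FreeGroup (Fin n)) :=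
  PresentedGroup.toGroup (braidRelations_artinAut n).forall_mem_lift_eq_one

theorem artinRep_of {n : ℕ} (k : Fin (n - 1)) : artinRep n (PresentedGroup.of k) =
    artinAut (⟨k, by lia⟩ : Fin n) ⟨k + 1, by lia⟩ :=
  PresentedGroup.toGroup.of _

end ArtinRepresentation

section TypeB

open SemidirectProduct

/-- The elements `b 0, …, b (n - 1)` of a group satisfy the relations of the standard generators of
the Artin group of type `Bₙ`. -/
structure TypeBRelations {n : ℕ} {G : Type*} [Group G] (b : Fin n → G) : Prop where
  mul_sq_eq : ∀ i j : Fin n, (i : ℕ) = 0 → (j : ℕ) = 1 → (b i * b j) ^ 2 = (b j * b i) ^ 2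
  isBraided : ∀ i j : Fin n, 1 ≤ (i : ℕ) → (i : ℕ) + 1 = j → IsBraided (b i) (b j)
  commute : ∀ i j : Fin n, (i : ℕ) + 2 ≤ j → Commute (b i) (b j)

theorem forall_mem_typeBRels_map_eq_one_iff {n : ℕ} {G : Type*} [Group G]
    (F : FreeGroup (Fin n) →* G) :
    (∀ r ∈ typeBRels n, F r = 1) ↔ TypeBRelations fun i => F (FreeGroup.of i) := by
  have hsq (i j : Fin n) : F ((FreeGroup.of i * FreeGroup.of j) ^ 2 *
      ((FreeGroup.of j * FreeGroup.of i) ^ 2)⁻¹) = 1 ↔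
      (F (FreeGroup.of i) * F (FreeGroup.of j)) ^ 2 =
        (F (FreeGroup.of j) * F (FreeGroup.of i)) ^ 2 := by
    simp only [map_mul, map_inv, map_pow, mul_inv_eq_one]
  constructor
  · exact fun h => {
      mul_sq_eq := fun i j hi hj => (hsq i j).1 (h _ ⟨i, j, .inl ⟨hi, hj, rfl⟩⟩)
      isBraided := fun i j hi hij =>
        (map_braidWord_eq_one_iff F _ _).1 (h _ ⟨i, j, .inr (.inl ⟨hi, hij, rfl⟩)⟩)
      commute := fun i j hij =>
        (map_commWord_eq_one_iff F _ _).1 (h _ ⟨i, j, .inr (.inr ⟨hij, rfl⟩)⟩) }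
  · rintro h r ⟨i, j, ⟨hi, hj, rfl⟩ | ⟨hi, hij, rfl⟩ | ⟨hij, rfl⟩⟩
    · exact (hsq i j).2 (h.mul_sq_eq i j hi hj)
    · exact (map_braidWord_eq_one_iff F _ _).2 (h.isBraided i j hi hij)
    · exact (map_commWord_eq_one_iff F _ _).2 (h.commute i j hij)

theorem TypeBRelations.forall_mem_lift_eq_one {n : ℕ} {G : Type*} [Group G] {b : Fin n → G}
    (hb : TypeBRelations b) : ∀ r ∈ typeBRels n, FreeGroup.lift b r = 1 :=
  (forall_mem_typeBRels_map_eq_one_iff _).2 (by simpa only [FreeGroup.lift_apply_of] using hb)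

theorem typeBRelations_of (n : ℕ) :
    TypeBRelations (PresentedGroup.of : Fin n → PresentedGroup (typeBRels n)) :=
  (forall_mem_typeBRels_map_eq_one_iff (PresentedGroup.mk _)).1
    fun _ => PresentedGroup.one_of_mem

variable {n : ℕ} {G : Type*} [Group G] {b : Fin n → G}

/-- The elements `x₀ = b₀` and `xₖ₊₁ = bₖ₊₁ xₖ bₖ₊₁⁻¹`. For the standard generators of the Artin
group of type `Bₙ` these freely generate the kernel of the projection to the braid group. -/
def kernelGen (b : Fin n → G) : Fin n → G
  | ⟨0, h⟩ => b ⟨0, h⟩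
  | ⟨k + 1, h⟩ => b ⟨k + 1, h⟩ * kernelGen b ⟨k, by lia⟩ * (b ⟨k + 1, h⟩)⁻¹

theorem kernelGen_of_val_add_one_eq {i j : Fin n} (hij : (i : ℕ) + 1 = j) :
    kernelGen b j = b j * kernelGen b i * (b j)⁻¹ := by
  obtain ⟨j, _⟩ := j
  obtain rfl : (i : ℕ) + 1 = j := hij
  rw [kernelGen]

namespace TypeBRelations

theorem commute_kernelGen_of_add_two_le (hb : TypeBRelations b) {i k : Fin n}
    (hik : (i : ℕ) + 2 ≤ k) : Commute (b k) (kernelGen b i) := by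
  obtain ⟨i, hi⟩ := i
  induction i with
  | zero => rw [kernelGen]; exact (hb.commute ⟨0, hi⟩ k hik).symm
  | succ i ih =>
    have hbk : Commute (b k) (b ⟨i + 1, hi⟩) := (hb.commute ⟨i + 1, hi⟩ k hik).symm
    rw [kernelGen]
    exact (hbk.mul_right (ih (by lia) (by simp only at hik ⊢; lia))).mul_right hbk.inv_right

theorem commute_kernelGen_of_lt (hb : TypeBRelations b) {i k : Fin n} (hk : 1 ≤ (k : ℕ))
    (hki : k < i) : Commute (b k) (kernelGen b i) := by
  obtain ⟨i, hi⟩ := i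
  induction i with
  | zero => exact absurd hki (Nat.not_lt_zero _)
  | succ i ih =>
    rcases (Nat.lt_succ_iff.1 hki : (k : ℕ) ≤ i).lt_or_eq with hlt | heq
    · have hbk : Commute (b k) (b ⟨i + 1, hi⟩) := hb.commute k ⟨i + 1, hi⟩ (Nat.succ_lt_succ hlt)
      rw [kernelGen]
      exact (hbk.mul_right (ih (by lia) hlt)).mul_right hbk.inv_right
    · obtain ⟨m, rfl⟩ : ∃ m, i = m + 1 := ⟨i - 1, by lia⟩
      obtain ⟨k, hkn⟩ := k
      obtain rfl : k = m + 1 := heq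
      have hbraid := hb.isBraided ⟨m + 1, hkn⟩ ⟨m + 2, hi⟩ hk rfl
      have hcomm := hb.commute_kernelGen_of_add_two_le (i := ⟨m, by lia⟩) (k := ⟨m + 2, hi⟩) le_rfl
      have hconj := (Commute.conj_iff (b ⟨m + 2, hi⟩ * b ⟨m + 1, hkn⟩)).2 hcomm
      rw [hbraid.mul_mul_mul_inv_eq] at hconj
      rw [kernelGen, kernelGen]
      convert hconj using 1
      group

theorem conj_kernelGen (hb : TypeBRelations b) {i j : Fin n} (hij : (i : ℕ) + 1 = j) :
    b j * kernelGen b j * (b j)⁻¹ = (kernelGen b j)⁻¹ * kernelGen b i * kernelGen b j := by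
  obtain ⟨i, hi⟩ := i
  induction i generalizing j with
  | zero =>
    have hsq := hb.mul_sq_eq ⟨0, hi⟩ j rfl hij.symm
    rw [kernelGen_of_val_add_one_eq hij, kernelGen, mul_assoc (_)⁻¹, eq_inv_mul_iff_mul_eq]
    set p := b ⟨0, hi⟩
    set q := b j
    calc q * p * q⁻¹ * (q * (q * p * q⁻¹) * q⁻¹) = (q * p) ^ 2 * (q ^ 2)⁻¹ := by
          simp only [pow_two]; group
      _ = p * (q * p * q⁻¹) := by rw [← hsq]; simp only [pow_two]; group
  | succ i ih =>
    have hbraid := hb.isBraided ⟨i + 1, hi⟩ j (by simp) hij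
    have hfar := hb.commute_kernelGen_of_add_two_le (i := ⟨i, by lia⟩) (k := j) hij.le
    have hlt : Commute (b ⟨i + 1, hi⟩) (kernelGen b j) :=
      hb.commute_kernelGen_of_lt (by simp) (Fin.lt_def.2 (by lia))
    have hX : kernelGen b ⟨i + 1, hi⟩ = _ := kernelGen_of_val_add_one_eq (i := ⟨i, by lia⟩) rfl
    obtain ⟨c, hc⟩ : ∃ c, c = MulAut.conj (b ⟨i + 1, hi⟩ * b j) := ⟨_, rfl⟩
    have hcb : c (b ⟨i + 1, hi⟩) = b j := by
      rw [hc, MulAut.conj_apply, hbraid.symm.mul_mul_mul_inv_eq]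
    have hci : c (kernelGen b ⟨i, by lia⟩) = kernelGen b ⟨i + 1, hi⟩ := by
      rw [hc, map_mul, MulAut.mul_apply, MulAut.conj_apply (b j), hfar.mul_inv_cancel, hX]; rfl
    have hcj : c (kernelGen b ⟨i + 1, hi⟩) = kernelGen b j := by
      rw [hc, map_mul, MulAut.mul_apply, MulAut.conj_apply (b j),
        ← kernelGen_of_val_add_one_eq hij, MulAut.conj_apply, hlt.mul_inv_cancel]
    simpa only [map_mul, map_inv, hcb, hci, hcj] using
      congrArg c (ih (j := ⟨i + 1, hi⟩) (by lia) rfl)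

end TypeBRelations

end TypeB

section SemidirectDecomposition

open SemidirectProduct

theorem apply_eq_conj_of_closure_eq_top {N G H : Type*} [Group N] [Group G] [Group H]
    (ρ : G →* MulAut N) (f : N →* H) (ψ : G →* H) {S : Set G} (hS : Subgroup.closure S = ⊤)
    (h : ∀ s ∈ S, ∀ x, f (ρ s x) = ψ s * f x * (ψ s)⁻¹) (g : G) (x : N) :
    f (ρ g x) = ψ g * f x * (ψ g)⁻¹ := by
  have hg : g ∈ Subgroup.closure S := hS ▸ Subgroup.mem_top g
  induction hg using Subgroup.closure_induction generalizing x with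
  | mem s hs => exact h s hs x
  | one => simp only [map_one, MulAut.one_apply, one_mul, inv_one, mul_one]
  | mul s t _ _ ihs iht =>
    rw [map_mul, MulAut.mul_apply, ihs, iht, map_mul]
    group
  | inv s _ ih =>
    have hs := ih (ρ s⁻¹ x)
    rw [map_inv, MulAut.apply_inv_self] at hs
    rw [map_inv, hs, map_inv]
    group

namespace TypeBRelations

variable {n : ℕ} {G : Type*} [Group G] {b : Fin n → G}

theorem braidRelations_succ (hb : TypeBRelations b) :
    BraidRelations fun k : Fin (n - 1) => b ⟨k + 1, by lia⟩ where
  isBraided i j hij := hb.isBraided _ _ (by simp) (by simpa using hij)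
  commute i j hij := hb.commute _ _ (by simp only; lia)

/-- The homomorphism from the braid group on `n` strands defined by `b 1, …, b (n - 1)`. -/
def braidHom (hb : TypeBRelations b) : PresentedGroup (braidRels (n - 1)) →* G :=
  PresentedGroup.toGroup hb.braidRelations_succ.forall_mem_lift_eq_one

theorem braidHom_of (hb : TypeBRelations b) (k : Fin (n - 1)) :
    hb.braidHom (PresentedGroup.of k) = b ⟨k + 1, by lia⟩ :=
  PresentedGroup.toGroup.of _

theorem lift_kernelGen_artinAut (hb : TypeBRelations b) {j k : Fin n} (hjk : (j : ℕ) + 1 = k) :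
    (FreeGroup.lift (kernelGen b)).comp (artinAut j k).toMonoidHom =
      (MulAut.conj (b k)).toMonoidHom.comp (FreeGroup.lift (kernelGen b)) := by
  have hne : j ≠ k := fun h => by simp [h] at hjk
  refine FreeGroup.ext_hom _ _ fun i => ?_
  simp only [MonoidHom.comp_apply, MulEquiv.toMonoidHom_eq_coe, MonoidHom.coe_coe,
    FreeGroup.lift_apply_of, MulAut.conj_apply]
  rcases eq_or_ne i j with rfl | hij
  · rw [artinAut_apply_left, FreeGroup.lift_apply_of, kernelGen_of_val_add_one_eq hjk]
  rcases eq_or_ne i k with rfl | hik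
  · rw [artinAut_apply_right hne, hb.conj_kernelGen hjk]
    simp only [map_mul, map_inv, FreeGroup.lift_apply_of]
  rw [artinAut_apply_of_ne hij hik, FreeGroup.lift_apply_of]
  refine (Commute.mul_inv_cancel ?_).symm
  rcases lt_or_gt_of_ne hij with h | h
  · exact hb.commute_kernelGen_of_add_two_le (by lia)
  · exact hb.commute_kernelGen_of_lt (by lia) (by lia)

theorem lift_kernelGen_artinRep (hb : TypeBRelations b)
    (g : PresentedGroup (braidRels (n - 1))) :
    (FreeGroup.lift (kernelGen b)).comp (artinRep n g).toMonoidHom =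
      (MulAut.conj (hb.braidHom g)).toMonoidHom.comp (FreeGroup.lift (kernelGen b)) := by
  refine MonoidHom.ext fun x => ?_
  refine apply_eq_conj_of_closure_eq_top (artinRep n) (FreeGroup.lift (kernelGen b)) hb.braidHom
    (PresentedGroup.closure_range_of _) ?_ g x
  rintro _ ⟨k, rfl⟩ y
  rw [artinRep_of, braidHom_of]
  exact DFunLike.congr_fun (hb.lift_kernelGen_artinAut rfl) y

/-- The homomorphism `Fₙ ⋊ Bₙ → G` defined by `b`, for the Artin action. -/
def semidirectHom (hb : TypeBRelations b) :
    FreeGroup (Fin n) ⋊[artinRep n] PresentedGroup (braidRels (n - 1)) →* G :=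
  SemidirectProduct.lift (FreeGroup.lift (kernelGen b)) hb.braidHom hb.lift_kernelGen_artinRep

end TypeBRelations

/-- The generators of `Fₙ ⋊ Bₙ` corresponding to the standard generators of the Artin group of type
`Bₙ`: the first free generator, followed by the Artin generators of the braid group. -/
def semidirectGen (n : ℕ) :
    Fin n → FreeGroup (Fin n) ⋊[artinRep n] PresentedGroup (braidRels (n - 1))
  | ⟨0, h⟩ => inl (FreeGroup.of ⟨0, h⟩)
  | ⟨k + 1, h⟩ => inr (PresentedGroup.of ⟨k, by lia⟩)

theorem inr_mul_inl {N G : Type*} [Group N] [Group G] {ρ : G →* MulAut N} (g : G) (x : N) :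
    (inr g * inl x : N ⋊[ρ] G) = inl (ρ g x) * inr g := by
  rw [inl_aut, map_inv, inv_mul_cancel_right]

theorem mul_sq_eq_mul_sq_of_mul_eq {G : Type*} [Group G] {a x y : G} (hx : a * x = y * a)
    (hy : a * y = y⁻¹ * x * y * a) : (x * a) ^ 2 = (a * x) ^ 2 := by
  calc (x * a) ^ 2 = x * (a * x) * a := by simp only [pow_two, mul_assoc]
    _ = y * (y⁻¹ * x * y * a) * a := by rw [hx]; group
    _ = (y * a) * (y * a) := by rw [← hy]; simp only [mul_assoc]
    _ = (a * x) ^ 2 := by rw [← hx, pow_two]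

theorem typeBRelations_semidirectGen (n : ℕ) : TypeBRelations (semidirectGen n) where
  mul_sq_eq := by
    rintro ⟨_, h0⟩ ⟨_, h1⟩ rfl rfl
    have hne : (⟨0, h0⟩ : Fin n) ≠ ⟨1, h1⟩ := by simp
    set a := semidirectGen n ⟨1, h1⟩
    set x : FreeGroup (Fin n) := FreeGroup.of ⟨0, h0⟩
    set y : FreeGroup (Fin n) := FreeGroup.of ⟨1, h1⟩
    have hinl (z : FreeGroup (Fin n)) :
        a * inl z = inl (artinAut ⟨0, h0⟩ ⟨1, h1⟩ z) * a := by
      rw [← artinRep_of (n := n) ⟨0, by lia⟩]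
      exact inr_mul_inl _ z
    have hx : a * inl x = inl y * a := by rw [hinl, artinAut_apply_left]
    have hy : a * inl y = inl (y⁻¹ * x * y) * a := by rw [hinl, artinAut_apply_right hne]
    exact mul_sq_eq_mul_sq_of_mul_eq hx (by rw [hy, map_mul, map_mul, map_inv]; rfl)
  isBraided := by
    rintro ⟨_ | i, hi⟩ ⟨_, hj⟩ h1 rfl
    · exact absurd h1 (by simp)
    · have := (braidRelations_of (n - 1)).isBraided ⟨i, by lia⟩ ⟨i + 1, by lia⟩ rfl
      exact this.map inr
  commute := by
    rintro ⟨_ | i, hi⟩ ⟨_ | j, hj⟩ hij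
    · exact absurd hij (by simp)
    · replace hij : 2 ≤ j + 1 := (zero_add 2).symm.trans_le hij
      simp only [semidirectGen, commute_iff_eq]
      rw [inr_mul_inl, artinRep_of, artinAut_apply_of_ne] <;>
        simp only [ne_eq, Fin.mk.injEq] <;> lia
    · exact absurd hij (by simp)
    · replace hij : i + 1 + 2 ≤ j + 1 := hij
      have hfar :=
        (braidRelations_of (n - 1)).commute ⟨i, by lia⟩ ⟨j, by lia⟩ (by simp only; lia)
      exact hfar.map inr

/-- The homomorphism from the Artin group of type `Bₙ` to `Fₙ ⋊ Bₙ` (an isomorphism). -/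
def toSemidirect (n : ℕ) : PresentedGroup (typeBRels n) →*
    FreeGroup (Fin n) ⋊[artinRep n] PresentedGroup (braidRels (n - 1)) :=
  PresentedGroup.toGroup (typeBRelations_semidirectGen n).forall_mem_lift_eq_one

theorem toSemidirect_of {n : ℕ} (i : Fin n) :
    toSemidirect n (PresentedGroup.of i) = semidirectGen n i :=
  PresentedGroup.toGroup.of _

theorem TypeBRelations.semidirectHom_semidirectGen {n : ℕ} {G : Type*} [Group G] {b : Fin n → G}
    (hb : TypeBRelations b) (i : Fin n) : hb.semidirectHom (semidirectGen n i) = b i := by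
  obtain ⟨_ | k, hi⟩ := i
  · rw [semidirectGen, semidirectHom, lift_inl, FreeGroup.lift_apply_of, kernelGen]
  · rw [semidirectGen, semidirectHom, lift_inr, braidHom_of]

theorem toSemidirect_injective (n : ℕ) : Function.Injective (toSemidirect n) := by
  have hid : (typeBRelations_of n).semidirectHom.comp (toSemidirect n) = MonoidHom.id _ :=
    PresentedGroup.ext fun i => by
      rw [MonoidHom.comp_apply, toSemidirect_of, TypeBRelations.semidirectHom_semidirectGen]
      rfl
  exact Function.LeftInverse.injective (g := (typeBRelations_of n).semidirectHom)
    (DFunLike.congr_fun hid)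

theorem right_toSemidirect {n : ℕ}
    (πB : PresentedGroup (typeBRels n) →* PresentedGroup (braidRels (n - 1)))
    (hπB1 : ∀ i : Fin n, (i : ℕ) = 0 → πB (PresentedGroup.of i) = 1)
    (hπB2 : ∀ (i : Fin n) (j : Fin (n - 1)), (i : ℕ) = (j : ℕ) + 1 →
      πB (PresentedGroup.of i) = PresentedGroup.of j) (y : PresentedGroup (typeBRels n)) :
    (toSemidirect n y).right = πB y := by
  suffices h : rightHom.comp (toSemidirect n) = πB from DFunLike.congr_fun h y
  refine PresentedGroup.ext fun i => ?_
  rw [MonoidHom.comp_apply, toSemidirect_of]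
  obtain ⟨_ | k, hi⟩ := i
  · rw [hπB1 _ rfl, semidirectGen, rightHom_inl]
  · rw [hπB2 _ ⟨k, by lia⟩ rfl, semidirectGen, rightHom_inr]

end SemidirectDecomposition

section TypeD

open SemidirectProduct

/-- The elements `d 0, …, d (n - 1)` of a group satisfy the relations of the standard generators of
the Artin group of type `Dₙ`. -/
structure TypeDRelations {n : ℕ} {G : Type*} [Group G] (d : Fin n → G) : Prop where
  commute_zero_one : ∀ i j : Fin n, (i : ℕ) = 0 → (j : ℕ) = 1 → Commute (d i) (d j)
  isBraided_zero_two : ∀ i j : Fin n, (i : ℕ) = 0 → (j : ℕ) = 2 → IsBraided (d i) (d j)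
  isBraided : ∀ i j : Fin n, 1 ≤ (i : ℕ) → (i : ℕ) + 1 = j → IsBraided (d i) (d j)
  commute_zero : ∀ i j : Fin n, (i : ℕ) = 0 → 3 ≤ (j : ℕ) → Commute (d i) (d j)
  commute : ∀ i j : Fin n, 1 ≤ (i : ℕ) → (i : ℕ) + 2 ≤ j → Commute (d i) (d j)

theorem forall_mem_typeDRels_map_eq_one_iff {n : ℕ} {G : Type*} [Group G]
    (F : FreeGroup (Fin n) →* G) :
    (∀ r ∈ typeDRels n, F r = 1) ↔ TypeDRelations fun i => F (FreeGroup.of i) := by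
  have hbraid (i j : Fin n) := map_braidWord_eq_one_iff F (FreeGroup.of i) (FreeGroup.of j)
  have hcomm (i j : Fin n) := map_commWord_eq_one_iff F (FreeGroup.of i) (FreeGroup.of j)
  constructor
  · intro h
    refine ⟨fun i j hi hj => ?_, fun i j hi hj => ?_, fun i j hi hij => ?_,
      fun i j hi hj => ?_, fun i j hi hij => ?_⟩
    · exact (hcomm i j).1 (h _ ⟨i, j, .inl ⟨hi, hj, rfl⟩⟩)
    · exact (hbraid i j).1 (h _ ⟨i, j, .inr (.inl ⟨hi, hj, rfl⟩)⟩)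
    · rcases hi.eq_or_lt' with hi | hi
      · exact (hbraid i j).1 (h _ ⟨i, j, .inr (.inr (.inl ⟨hi, by lia, rfl⟩))⟩)
      · exact (hbraid i j).1 (h _ ⟨i, j, .inr (.inr (.inr (.inl ⟨hi, hij, rfl⟩)))⟩)
    · exact (hcomm i j).1 (h _ ⟨i, j, .inr (.inr (.inr (.inr (.inl ⟨hi, hj, rfl⟩))))⟩)
    · exact (hcomm i j).1 (h _ ⟨i, j, .inr (.inr (.inr (.inr (.inr ⟨hi, hij, rfl⟩))))⟩)
  · rintro h r ⟨i, j, ⟨hi, hj, rfl⟩ | ⟨hi, hj, rfl⟩ | ⟨hi, hj, rfl⟩ | ⟨hi, hij, rfl⟩ |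
      ⟨hi, hj, rfl⟩ | ⟨hi, hij, rfl⟩⟩
    · exact (hcomm i j).2 (h.commute_zero_one i j hi hj)
    · exact (hbraid i j).2 (h.isBraided_zero_two i j hi hj)
    · exact (hbraid i j).2 (h.isBraided i j hi.ge (by lia))
    · exact (hbraid i j).2 (h.isBraided i j (by lia) hij)
    · exact (hcomm i j).2 (h.commute_zero i j hi hj)
    · exact (hcomm i j).2 (h.commute i j hi hij)

theorem TypeDRelations.forall_mem_lift_eq_one {n : ℕ} {G : Type*} [Group G] {d : Fin n → G}
    (hd : TypeDRelations d) : ∀ r ∈ typeDRels n, FreeGroup.lift d r = 1 :=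
  (forall_mem_typeDRels_map_eq_one_iff _).2 (by simpa only [FreeGroup.lift_apply_of] using hd)

theorem typeDRelations_of (n : ℕ) :
    TypeDRelations (PresentedGroup.of : Fin n → PresentedGroup (typeDRels n)) :=
  (forall_mem_typeDRels_map_eq_one_iff (PresentedGroup.mk _)).1
    fun _ => PresentedGroup.one_of_mem

/-- The generators `b₀ b₁ b₀⁻¹, b₁, b₂, …` of type `Dₙ` obtained from generators of type `Bₙ` of
which `b₀` is an involution, as for the Coxeter groups of these types. -/
def typeDGen {n : ℕ} {G : Type*} [Group G] (b : Fin n → G) (i : Fin n) : G :=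
  if h : (i : ℕ) = 0 ∧ 1 < n then b i * b ⟨1, h.2⟩ * (b i)⁻¹ else b i

theorem typeDGen_of_val_eq_zero {n : ℕ} {G : Type*} [Group G] (b : Fin n → G) {i j : Fin n}
    (hi : (i : ℕ) = 0) (hj : (j : ℕ) = 1) : typeDGen b i = b i * b j * (b i)⁻¹ := by
  have hn : 1 < n := hj ▸ j.2
  rw [show j = ⟨1, hn⟩ from Fin.ext hj]
  exact dif_pos ⟨hi, hn⟩

theorem typeDGen_of_one_le {n : ℕ} {G : Type*} [Group G] (b : Fin n → G) {i : Fin n}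
    (hi : 1 ≤ (i : ℕ)) : typeDGen b i = b i :=
  dif_neg fun h => by lia

theorem TypeBRelations.typeDRelations {n : ℕ} {G : Type*} [Group G] {b : Fin n → G}
    (hb : TypeBRelations b) (hinv : ∀ i : Fin n, (i : ℕ) = 0 → (b i)⁻¹ = b i) :
    TypeDRelations (typeDGen b) where
  commute_zero_one i j hi hj := by
    rw [typeDGen_of_val_eq_zero b hi hj, typeDGen_of_one_le b hj.ge, hinv i hi]
    simpa only [Commute, SemiconjBy, pow_two, mul_assoc] using hb.mul_sq_eq i j hi hj
  isBraided_zero_two i j hi hj := by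
    have hcomm := hb.commute i j (by lia)
    have h1 : (⟨1, by lia⟩ : Fin n).val = 1 := rfl
    have h := (hb.isBraided ⟨1, by lia⟩ j le_rfl hj.symm).map (MulAut.conj (b i)).toMonoidHom
    simp only [MulEquiv.toMonoidHom_eq_coe, MonoidHom.coe_coe, MulAut.conj_apply] at h
    rwa [hcomm.mul_inv_cancel, ← typeDGen_of_val_eq_zero b hi h1,
      ← typeDGen_of_one_le b (by lia : 1 ≤ (j : ℕ))] at h
  isBraided i j hi hij := by
    rw [typeDGen_of_one_le b hi, typeDGen_of_one_le b (by lia)]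
    exact hb.isBraided i j hi hij
  commute_zero i j hi hj := by
    have hij := hb.commute i j (by lia)
    rw [typeDGen_of_val_eq_zero b hi (j := ⟨1, by lia⟩) rfl, typeDGen_of_one_le b (by lia)]
    exact (hij.mul_left (hb.commute _ j hj)).mul_left hij.inv_left
  commute i j hi hij := by
    rw [typeDGen_of_one_le b hi, typeDGen_of_one_le b (by lia)]
    exact hb.commute i j hij

end TypeD

section SignedPermutations

open SemidirectProduct Equiv

theorem isBraided_swap {α : Type*} [DecidableEq α] {a b c : α} (hab : a ≠ b) (hac : a ≠ c)
    (hbc : b ≠ c) : IsBraided (swap a b) (swap b c) := by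
  rw [IsBraided, swap_mul_swap_mul_swap hab hac, swap_comm a b, swap_comm b c,
    swap_mul_swap_mul_swap hbc.symm hac.symm, swap_comm]

/-- The group of signed permutations of `ℕ`. -/
abbrev SignedPerm : Type :=
  (ℕ → ℤˣ) ⋊[mulAutArrow (G := Perm ℕ) (A := ℕ) (M := ℤˣ)] Perm ℕ

/-- The standard generators of the group of signed permutations: the sign change of `0`, followed
by the transpositions `(k k+1)`. -/
def signedPermGen : ℕ → SignedPerm
  | 0 => inl (Pi.mulSingle 0 (-1))
  | k + 1 => inr (swap k (k + 1))

theorem mulAutArrow_apply_mulSingle (σ : Perm ℕ) (k : ℕ) (u : ℤˣ) :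
    mulAutArrow σ (Pi.mulSingle k u : ℕ → ℤˣ) = Pi.mulSingle (σ k) u := by
  funext m
  change (Pi.mulSingle k u : ℕ → ℤˣ) (σ⁻¹ m) = _
  simp only [Pi.mulSingle_apply, Perm.inv_eq_iff_eq]

theorem typeBRelations_signedPermGen (n : ℕ) :
    TypeBRelations fun i : Fin n => signedPermGen i where
  mul_sq_eq i j hi hj := by
    simp only [hi, hj, signedPermGen]
    apply mul_sq_eq_mul_sq_of_mul_eq (y := inl (Pi.mulSingle 1 (-1)))
    · rw [inr_mul_inl, mulAutArrow_apply_mulSingle, swap_apply_left]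
    · rw [inr_mul_inl, mulAutArrow_apply_mulSingle, swap_apply_right, ← map_inv, ← map_mul,
        ← map_mul, inv_mul_cancel_comm]
  isBraided := by
    rintro ⟨_ | i, hi⟩ ⟨_, hj⟩ h1 rfl
    · exact absurd h1 (by simp)
    · have := isBraided_swap (a := i) (b := i + 1) (c := i + 2) (by lia) (by lia) (by lia)
      exact this.map inr
  commute := by
    rintro ⟨_ | i, hi⟩ ⟨_ | j, hj⟩ hij
    · exact absurd hij (by simp)
    · replace hij : 2 ≤ j + 1 := (zero_add 2).symm.trans_le hij
      simp only [signedPermGen, commute_iff_eq]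
      rw [inr_mul_inl, mulAutArrow_apply_mulSingle, swap_apply_of_ne_of_ne] <;> lia
    · exact absurd hij (by simp)
    · replace hij : i + 1 + 2 ≤ j + 1 := hij
      refine (Perm.disjoint_swap_swap ?_).commute.map inr
      simp only [List.nodup_cons, List.mem_cons, List.not_mem_nil, List.nodup_nil]
      lia

theorem typeDRels_of_zero_ne_of_one {n : ℕ} (i j : Fin n) (hi : (i : ℕ) = 0)
    (hj : (j : ℕ) = 1) :
    (PresentedGroup.of i : PresentedGroup (typeDRels n)) ≠ PresentedGroup.of j := by
  intro h
  have hD := (typeBRelations_signedPermGen n).typeDRelations fun k hk => by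
    simp only [hk, signedPermGen]
    rw [← map_inv, ← Pi.mulSingle_inv, inv_neg, inv_one]
  have hgen := congrArg (PresentedGroup.toGroup hD.forall_mem_lift_eq_one) h
  rw [PresentedGroup.toGroup.of, PresentedGroup.toGroup.of, typeDGen_of_val_eq_zero _ hi hj,
    typeDGen_of_one_le _ hj.ge] at hgen
  simp only [hi, hj, signedPermGen] at hgen
  rw [mul_inv_eq_iff_eq_mul, inr_mul_inl, mul_left_inj, inl_inj, mulAutArrow_apply_mulSingle,
    swap_apply_left] at hgen
  exact absurd (congrFun hgen 0) (by simp)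

end SignedPermutations

theorem stmt18_general {n : ℕ} (hn : 3 ≤ n)
    (πB : PresentedGroup (typeBRels n) →* PresentedGroup (braidRels (n - 1)))
    (hπB1 : ∀ i : Fin n, (i : ℕ) = 0 → πB (PresentedGroup.of i) = 1)
    (hπB2 : ∀ (i : Fin n) (j : Fin (n - 1)), (i : ℕ) = (j : ℕ) + 1 →
      πB (PresentedGroup.of i) = PresentedGroup.of j)
    (φ : PresentedGroup (typeDRels n) →* PresentedGroup (typeBRels n))
    (hφ : ∀ i : Fin n, (i : ℕ) ≤ 1 →
      πB (φ (PresentedGroup.of i)) = PresentedGroup.of ⟨0, by lia⟩) :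
    φ (PresentedGroup.of ⟨0, by lia⟩) = φ (PresentedGroup.of ⟨1, by lia⟩) := by
  have hright (i : Fin n) (hi : (i : ℕ) ≤ 1) :
      (toSemidirect n (φ (PresentedGroup.of i))).right = PresentedGroup.of ⟨0, by lia⟩ := by
    rw [right_toSemidirect πB hπB1 hπB2, hφ i hi]
  have hD := typeDRelations_of n
  apply toSemidirect_injective n
  refine eq_of_commute_of_isBraided (iInf_rationalDimensionSubgroup_freeGroup_eq_bot (Fin n))
    (c := toSemidirect n (φ (PresentedGroup.of ⟨2, by lia⟩))) ?_ ?_ ?_ ?_ ?_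
  · rw [hright _ zero_le_one, hright _ le_rfl]
  · rw [hright _ zero_le_one, artinRep_of, abelianizationAut_artinAut_sq]
  · exact ((hD.commute_zero_one _ _ rfl rfl).map φ).map (toSemidirect n)
  · exact ((hD.isBraided_zero_two _ _ rfl rfl).map φ).map (toSemidirect n)
  · exact ((hD.isBraided _ _ le_rfl rfl).map φ).map (toSemidirect n)

/-- for `n ≥ 4` there is no injective homomorphism
`φ : A(Dₙ) → A(Bₙ)` with `π_D = π_B ∘ φ`, where `π_B : A(Bₙ) → Bₙ` kills `β₁` and sends
`βᵢ ↦ α_{i-1}` (`i ≥ 2`), and `π_D : A(Dₙ) → Bₙ` sends `δ₁, δ₂ ↦ α₁` and `δᵢ ↦ α_{i-1}`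
(`i ≥ 3`); here the braid group `Bₙ` has generators `α₁, …, α_{n-1}` indexed by `Fin (n-1)`. -/
theorem stmt18 (n : ℕ) (hn : 4 ≤ n)
    (πB : PresentedGroup (typeBRels n) →* PresentedGroup (braidRels (n - 1)))
    (hπB1 : ∀ i : Fin n, (i : ℕ) = 0 → πB (PresentedGroup.of i) = 1)
    (hπB2 : ∀ (i : Fin n) (j : Fin (n - 1)), (i : ℕ) = (j : ℕ) + 1 →
      πB (PresentedGroup.of i) = PresentedGroup.of j)
    (πD : PresentedGroup (typeDRels n) →* PresentedGroup (braidRels (n - 1)))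
    (hπD1 : ∀ (i : Fin n) (j : Fin (n - 1)), (i : ℕ) ≤ 1 → (j : ℕ) = 0 →
      πD (PresentedGroup.of i) = PresentedGroup.of j)
    (hπD2 : ∀ (i : Fin n) (j : Fin (n - 1)), 2 ≤ (i : ℕ) → (i : ℕ) = (j : ℕ) + 1 →
      πD (PresentedGroup.of i) = PresentedGroup.of j) :
    ¬ ∃ φ : PresentedGroup (typeDRels n) →* PresentedGroup (typeBRels n),
        Function.Injective φ ∧ πB.comp φ = πD := by
  rintro ⟨φ, hφ, rfl⟩
  exact typeDRels_of_zero_ne_of_one ⟨0, by lia⟩ ⟨1, by lia⟩ rfl rfl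
    (hφ (stmt18_general (by lia) πB hπB1 hπB2 φ fun i hi => hπD1 i _ hi rfl))
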